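/- Let n, m ≥ 1, let D be an n×n real matrix, and let α, β, h be strictly positive reals such that every root s ∈ ℂ of the characteristic polynomial of D satisfies s ≠ 1, β < θ(s), and h < 2β²(θ(s) − β)/(α(ϑ(s)² + β²)), where θ(s) = Re(2/(1 − s)) and ϑ(s) = Im(2/(1 − s)). Let γ₁, γ₂ ≥ 0 and let ε₀, υ₀, a₀ : ℝ → ℝᵐ satisfy: ε₀ is differentiable with derivative υ₀, υ₀ is differentiable with derivative a₀, ‖υ₀(t)‖_∞ ≤ γ₁ and ‖a₀(t)‖_∞ ≤ γ₂ for all t. Fix t₀ ∈ ℝ and set t_k = t₀ + kh. Then there exists a constant C > 0, depending only on n, D, α, β, and h, such that for every pair of sequences ε̄, ῡ : ℕ → (ℝᵐ)ⁿ satisfying, for all k ≥ 1 and all i ∈ {1, …, n}, ε̄_i(k+1) = Σ_j [(1−αh)I + αhD]_{ij} ε̄_j(k) + h·Σ_j [(1−β)I + βD]_{ij} ῡ_j(k) + ε₀(t_k) − ε₀(t_{k+1}) + h·υ₀(t_k) and ῡ_i(k+1) = α·Σ_j [D − I]_{ij} ε̄_j(k) + Σ_j [(1−β)I + βD]_{ij}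 ῡ_j(k) + υ₀(t_k) − υ₀(t_{k+1}), one has limsup_{k→∞} max_i ‖ε̄_i(k)‖_∞ ≤ C·h·max(2γ₁, γ₂) and limsup_{k→∞} max_i ‖ῡ_i(k)‖_∞ ≤ C·h·max(2γ₁, γ₂). -/

import Mathlib

lemma scalar_stab (c β : ℝ) (hc : 0 < c) (hβ : 0 < β) (p z : ℂ)
    (hcond : c * (p.im ^ 2 + β ^ 2) < 2 * β ^ 2 * (p.re - β)) (hz1 : z ≠ 1)
    (hq : p * (z - 1) ^ 2 + 2 * (c * z + β * (z - 1)) = 0) : ‖z‖ < 1 := by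
  by_contra hlt
  push Not at hlt
  have hz1' : z - 1 ≠ 0 := sub_ne_zero.mpr hz1
  obtain ⟨q, hqd⟩ : ∃ q : ℂ, q = (z - 1)⁻¹ := ⟨_, rfl⟩
  have hzq : (z - 1) * q = 1 := by rw [hqd]; exact mul_inv_cancel₀ hz1'
  have hp : p = -2 * (c * (q + q ^ 2) + β * q) := by
    have : (z - 1) ^ 2 * p = (z - 1) ^ 2 * (-2 * (c * (q + q ^ 2) + β * q)) := by
      have e1 : (z - 1) ^ 2 * (-2 * (c * (q + q ^ 2) + β * q)) =
        -2 * (c * ((z - 1) * ((z - 1) * q) + ((z - 1) * q) ^ 2) + β * ((z - 1) * ((z - 1) * q))) := by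
        ring
      rw [e1, hzq]
      linear_combination hq
    exact mul_left_cancel₀ (pow_ne_zero 2 hz1') this
  have hzq2 : z * q = q + 1 := by linear_combination hzq
  have hn : ‖q‖ ≤ ‖q + 1‖ := by
    rw [← hzq2, norm_mul]
    exact le_mul_of_one_le_left (norm_nonneg _) hlt
  have hn2 : Complex.normSq q ≤ Complex.normSq (q + 1) := by
    rw [Complex.normSq_eq_norm_sq, Complex.normSq_eq_norm_sq]
    gcongr
  obtain ⟨x, y⟩ := q
  simp only [Complex.normSq_apply, Complex.add_re, Complex.add_im, Complex.one_re, Complex.one_im] at hn2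
  have hx : 0 ≤ x + 1 / 2 := by nlinarith
  obtain ⟨r, hr⟩ : ∃ r, r = x + 1 / 2 := ⟨_, rfl⟩
  have hx' : x = r - 1 / 2 := by linarith
  rw [← hr] at hx
  subst hx'
  have hre : p.re = -2 * (c * (r ^ 2 - y ^ 2 - 1 / 4) + β * (r - 1 / 2)) := by
    rw [hp]
    simp only [pow_two, Complex.mul_im, Complex.mul_re, Complex.add_im, Complex.add_re,
      Complex.ofReal_re, Complex.ofReal_im, Complex.neg_re, Complex.neg_im, Complex.re_ofNat,
      Complex.im_ofNat]
    ring
  have him : p.im = -2 * y * (2 * c * r + β) := by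
    rw [hp]
    simp only [pow_two, Complex.mul_im, Complex.mul_re, Complex.add_im, Complex.add_re,
      Complex.ofReal_re, Complex.ofReal_im, Complex.neg_re, Complex.neg_im, Complex.re_ofNat,
      Complex.im_ofNat]
    ring
  rw [hre, him] at hcond
  have h1 : 0 ≤ c * y ^ 2 * (c * r * (c * r + β)) := by positivity
  have h2 : 0 ≤ β ^ 2 * (c * r ^ 2 + β * r) := by positivity
  nlinarith

open Matrix
attribute [local instance] Matrix.linftyOpNormedRing Matrix.linftyOpNormedAlgebra

lemma summable_of_spec {ι : Type*} [Fintype ι] [DecidableEq ι] [Nonempty ι] (A : Matrix ι ι ℂ)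
    (hA : ∀ z ∈ spectrum ℂ A, ‖z‖ < 1) : Summable (fun k => ‖A ^ k‖) := by
  have : CompleteSpace (Matrix ι ι ℂ) := FiniteDimensional.complete ℂ _
  have hs : spectralRadius ℂ A < 1 := by
    have := spectrum.spectralRadius_lt_of_forall_lt A (r := 1) (fun k hk => by
      have := hA k hk
      exact_mod_cast this)
    simpa using this
  obtain ⟨r, hr1, hr2⟩ := ENNReal.lt_iff_exists_nnreal_btwn.mp hs
  have ht := spectrum.pow_nnnorm_pow_one_div_tendsto_nhds_spectralRadius A
  have hev := (ht.eventually_lt_const hr1)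
  have hr2' : (r : ℝ) < 1 := by exact_mod_cast hr2
  refine Summable.of_norm_bounded_eventually_nat (summable_geometric_of_lt_one r.2 hr2') ?_
  filter_upwards [hev, Filter.eventually_gt_atTop 0] with k hk hk0
  have hk0' : (0:ℝ) < k := by exact_mod_cast hk0
  rw [one_div, ENNReal.rpow_inv_lt_iff hk0'] at hk
  have : ‖A ^ k‖₊ ≤ r ^ k := by
    have h3 := hk.le
    rw [ENNReal.rpow_natCast] at h3
    exact_mod_cast h3
  rw [norm_norm]
  exact_mod_cast this

lemma norm_ofReal_map {ι : Type*} [Fintype ι] [DecidableEq ι] (A : Matrix ι ι ℝ) :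
    ‖A.map (fun x => (x : ℂ))‖ = ‖A‖ := by
  simp [Matrix.linfty_opNorm_def]

lemma eig_bound {n : ℕ} (D : Matrix (Fin n) (Fin n) ℂ) (α β h : ℝ)
    (hα : 0 < α) (hβ : 0 < β) (hh : 0 < h)
    (heig : ∀ s ∈ D.charpoly.roots,
      s ≠ 1 ∧ β < (2 / (1 - s)).re ∧
        h < 2 * β ^ 2 * ((2 / (1 - s)).re - β) / (α * ((2 / (1 - s)).im ^ 2 + β ^ 2)))
    (z : ℂ) (x y : Fin n → ℂ) (hxy : x ≠ 0 ∨ y ≠ 0)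
    (h1 : z • x = x + (α * h : ℂ) • (D *ᵥ x - x) + (h : ℂ) • (y + (β : ℂ) • (D *ᵥ y - y)))
    (h2 : z • y = (α : ℂ) • (D *ᵥ x - x) + (y + (β : ℂ) • (D *ᵥ y - y))) : ‖z‖ < 1 := by
  have hhc : (h : ℂ) ≠ 0 := by exact_mod_cast hh.ne'
  have hαc : (α : ℂ) ≠ 0 := by exact_mod_cast hα.ne'
  rcases eq_or_ne z 0 with hz | hz
  · simp [hz]
  have h3 : y = ((z - 1) / (h * z)) • x := by
    have : (h * z : ℂ) • y = (z - 1) • x := by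
      rw [mul_smul, h2, sub_smul, h1]
      module
    rw [div_eq_inv_mul, mul_smul, ← this, smul_smul, inv_mul_cancel₀ (mul_ne_zero hhc hz), one_smul]
  have hx : x ≠ 0 := by
    rintro rfl
    simp at h3
    simp [h3] at hxy
  obtain ⟨c, hc⟩ : ∃ c : ℂ, c = (z - 1) / (h * z) := ⟨_, rfl⟩
  have hc' : c * (h * z) = z - 1 := by rw [hc]; field_simp
  rw [← hc] at h3
  have h4 : ((z - 1) * c) • x = (α + β * c) • (D *ᵥ x - x) := by
    rw [h3, Matrix.mulVec_smul] at h2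
    have : ((z - 1) * c) • x = z • c • x - c • x := by module
    rw [this, h2]
    module
  have hne : (α + β * c : ℂ) ≠ 0 := by
    intro h0
    rw [h0, zero_smul, smul_eq_zero] at h4
    rcases h4 with h4 | h4
    · have : c = 0 := by
        rcases mul_eq_zero.mp h4 with h5 | h5
        · rw [hc, h5]; simp
        · exact h5
      rw [this] at h0
      simp at h0
      exact hα.ne' h0
    · exact hx h4
  obtain ⟨s, hs⟩ : ∃ s : ℂ, s = 1 + (z - 1) * c / (α + β * c) := ⟨_, rfl⟩
  have h5 : D *ᵥ x = s • x := by
    have : D *ᵥ x - x = (α + β * c)⁻¹ • ((z - 1) * c) • x := by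
      rw [h4, smul_smul, inv_mul_cancel₀ hne, one_smul]
    rw [eq_add_of_sub_eq this, hs, div_eq_inv_mul]
    module
  have hroot : s ∈ D.charpoly.roots := by
    rw [Polynomial.mem_roots D.charpoly_monic.ne_zero, Polynomial.IsRoot, Matrix.eval_charpoly,
      ← Matrix.exists_mulVec_eq_zero_iff]
    refine ⟨x, hx, ?_⟩
    rw [Matrix.sub_mulVec, h5, Matrix.scalar_apply, ← Matrix.smul_one_eq_diagonal,
      Matrix.smul_mulVec, Matrix.one_mulVec, sub_self]
  obtain ⟨hs1, hs2, hs3⟩ := heig s hroot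
  have hμ : (1 - s : ℂ) ≠ 0 := sub_ne_zero.mpr (Ne.symm hs1)
  have hz1 : z ≠ 1 := by
    rintro rfl
    apply hs1
    rw [hs]; simp
  have hpos : 0 < α * ((2 / (1 - s)).im ^ 2 + β ^ 2) := by positivity
  rw [lt_div_iff₀ hpos] at hs3
  refine scalar_stab (α * h) β (by positivity) hβ (2 / (1 - s)) z (by linarith) hz1 ?_
  have e : (1 - s) * (α + β * c) = - ((z - 1) * c) := by
    have e0 : (z - 1) * c / (α + β * c) * (α + β * c) = (z - 1) * c := div_mul_cancel₀ _ hne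
    rw [hs]
    linear_combination -e0
  have e2 : (1 - s) * (α * h * z + β * (z - 1)) = - (z - 1) ^ 2 := by
    linear_combination (h * z) * e - ((1 - s) * β + (z - 1)) * hc'
  have e3 : (2 / (1 - s)) * (1 - s) = 2 := div_mul_cancel₀ _ hμ
  push_cast
  apply mul_left_cancel₀ hμ
  linear_combination 2 * e2 + (z - 1) ^ 2 * e3

lemma rec_bound {ι : Type*} [Fintype ι] [DecidableEq ι] (A : Matrix ι ι ℝ)
    (hA : Summable (fun k => ‖A ^ k‖)) (x d : ℕ → ι → ℝ) (δ : ℝ)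
    (hd : ∀ k, ‖d k‖ ≤ δ) (hx : ∀ k, 1 ≤ k → x (k + 1) = A *ᵥ x k + d k) (k : ℕ) :
    ‖x (k + 1)‖ ≤ ‖A ^ k‖ * ‖x 1‖ + (∑' j, ‖A ^ j‖) * δ := by
  have hδ : 0 ≤ δ := (norm_nonneg _).trans (hd 0)
  have key : x (k + 1) = (A ^ k) *ᵥ x 1 + ∑ j ∈ Finset.range k, (A ^ j) *ᵥ d (k - j) := by
    induction k with
    | zero => simp
    | succ k ih =>
      rw [hx (k + 1) (by omega), ih, Finset.sum_range_succ', Matrix.mulVec_add, Matrix.mulVec_mulVec,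
        ← pow_succ', Matrix.mulVec_sum]
      simp only [Matrix.mulVec_mulVec, ← pow_succ', Nat.add_sub_add_right, pow_zero,
        Matrix.one_mulVec, Nat.sub_zero, add_assoc]
  rw [key]
  refine (norm_add_le _ _).trans (add_le_add (Matrix.linfty_opNorm_mulVec _ _) ?_)
  refine (norm_sum_le _ _).trans ?_
  calc ∑ j ∈ Finset.range k, ‖(A ^ j) *ᵥ d (k - j)‖ ≤ ∑ j ∈ Finset.range k, ‖A ^ j‖ * δ := by
        refine Finset.sum_le_sum fun j _ => (Matrix.linfty_opNorm_mulVec _ _).trans ?_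
        gcongr
        exact hd _
    _ = (∑ j ∈ Finset.range k, ‖A ^ j‖) * δ := by rw [Finset.sum_mul]
    _ ≤ _ := by
        gcongr
        exact hA.sum_le_tsum _ (fun _ _ => norm_nonneg _)

lemma gamma_summable {n : ℕ} (hn : 1 ≤ n) (D : Matrix (Fin n) (Fin n) ℝ) (α β h : ℝ)
    (hα : 0 < α) (hβ : 0 < β) (hh : 0 < h)
    (heig : ∀ s ∈ (D.map (fun x => (x : ℂ))).charpoly.roots,
      s ≠ 1 ∧ β < (2 / (1 - s)).re ∧
        h < 2 * β ^ 2 * ((2 / (1 - s)).re - β) / (α * ((2 / (1 - s)).im ^ 2 + β ^ 2))) :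
    Summable (fun k => ‖(Matrix.fromBlocks
      ((1 - α * h) • (1 : Matrix (Fin n) (Fin n) ℝ) + (α * h) • D)
      (h • ((1 - β) • (1 : Matrix (Fin n) (Fin n) ℝ) + β • D))
      (α • (D - 1)) ((1 - β) • (1 : Matrix (Fin n) (Fin n) ℝ) + β • D)) ^ k‖) := by
  have : Nonempty (Fin n) := ⟨⟨0, hn⟩⟩
  set A := Matrix.fromBlocks
      ((1 - α * h) • (1 : Matrix (Fin n) (Fin n) ℝ) + (α * h) • D)
      (h • ((1 - β) • (1 : Matrix (Fin n) (Fin n) ℝ) + β • D))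
      (α • (D - 1)) ((1 - β) • (1 : Matrix (Fin n) (Fin n) ℝ) + β • D) with hA
  have hmap : ∀ k, ‖A ^ k‖ = ‖(A.map (fun x => (x : ℂ))) ^ k‖ := by
    intro k
    rw [← norm_ofReal_map]
    congr 1
    exact map_pow (Complex.ofRealHom.mapMatrix) A k
  simp_rw [hmap]
  apply summable_of_spec
  intro z hz
  rw [Matrix.mem_spectrum_iff_isRoot_charpoly, Polynomial.IsRoot, Matrix.eval_charpoly,
      ← Matrix.exists_mulVec_eq_zero_iff] at hz
  obtain ⟨v, hv, hzv⟩ := hz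
  rw [Matrix.sub_mulVec, Matrix.scalar_apply, ← Matrix.smul_one_eq_diagonal,
      Matrix.smul_mulVec, Matrix.one_mulVec, sub_eq_zero] at hzv
  have hAc : A.map (fun x => (x : ℂ)) = Matrix.fromBlocks
      ((1 - α * h : ℂ) • (1 : Matrix (Fin n) (Fin n) ℂ) + (α * h : ℂ) • D.map (fun x => (x : ℂ)))
      ((h : ℂ) • ((1 - β : ℂ) • (1 : Matrix (Fin n) (Fin n) ℂ) + (β : ℂ) • D.map (fun x => (x : ℂ))))
      ((α : ℂ) • (D.map (fun x => (x : ℂ)) - 1))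
      ((1 - β : ℂ) • (1 : Matrix (Fin n) (Fin n) ℂ) + (β : ℂ) • D.map (fun x => (x : ℂ))) := by
    rw [hA, Matrix.fromBlocks_map]
    congr 1 <;> ext i j <;> by_cases hij : i = j <;> simp [Matrix.one_apply, hij, mul_add]
  rw [hAc, Matrix.fromBlocks_mulVec] at hzv
  refine eig_bound (D.map (fun x => (x : ℂ))) α β h hα hβ hh heig z (v ∘ Sum.inl) (v ∘ Sum.inr)
    ?_ ?_ ?_
  · by_contra hcon
    push Not at hcon
    apply hv
    ext i
    rcases i with i | i
    · exact congrFun hcon.1 i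
    · exact congrFun hcon.2 i
  · ext i
    have := congrFun hzv (Sum.inl i)
    simp only [Pi.smul_apply, Sum.elim_inl, Matrix.add_mulVec, Matrix.smul_mulVec,
      Matrix.one_mulVec, Pi.add_apply, smul_eq_mul] at this
    simp only [Pi.smul_apply, Pi.add_apply, Pi.sub_apply, smul_eq_mul, Function.comp_apply] at this ⊢
    rw [this]
    ring
  · ext i
    have := congrFun hzv (Sum.inr i)
    simp only [Pi.smul_apply, Sum.elim_inr, Matrix.add_mulVec, Matrix.sub_mulVec, Matrix.smul_mulVec,
      Matrix.one_mulVec, Pi.add_apply, smul_eq_mul] at this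
    simp only [Pi.smul_apply, Pi.add_apply, Pi.sub_apply, smul_eq_mul, Function.comp_apply] at this ⊢
    rw [this]
    ring

lemma limsup_le_aux {E : Type*} [NormedAddCommGroup E] (u : ℕ → E) (a : ℕ → ℝ) (K b : ℝ)
    (ha : Filter.Tendsto a Filter.atTop (nhds 0))
    (hu : ∀ k, ‖u (k + 1)‖ ≤ a k * K + b) :
    Filter.limsup (fun k => ‖u k‖) Filter.atTop ≤ b := by
  rw [← Filter.limsup_nat_add (fun k => ‖u k‖) 1]
  have ht : Filter.Tendsto (fun k => a k * K + b) Filter.atTop (nhds b) := by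
    simpa using (ha.mul_const K).add_const b
  rw [← ht.limsup_eq]
  refine Filter.limsup_le_limsup (Filter.Eventually.of_forall hu) ?_ ht.isBoundedUnder_le
  exact Filter.isCoboundedUnder_le_of_le Filter.atTop (x := 0) fun k => norm_nonneg _

lemma incr_bound {m : ℕ} (f f' : ℝ → Fin m → ℝ) (γ : ℝ) (hf : ∀ t, HasDerivAt f (f' t) t)
    (hb : ∀ t, ‖f' t‖ ≤ γ) (a h : ℝ) (hh : 0 < h) : ‖f a - f (a + h)‖ ≤ h * γ := by
  have := Convex.norm_image_sub_le_of_norm_hasDerivWithin_le (s := Set.univ) (x := a + h) (y := a)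
    (fun x _ => (hf x).hasDerivWithinAt) (fun x _ => hb x) convex_univ trivial trivial
  refine this.trans (le_of_eq ?_)
  rw [Real.norm_eq_abs, show a - (a + h) = -h by ring, abs_neg, abs_of_pos hh, mul_comm]


/-- Estimator part of Theorem 4 (second-order DCEA): under `β < θ(s)` and the
sampling-period condition (5.2) `h < 2β²(θ(s) − β)/(α(ϑ(s)² + β²))` for every eigenvalue
`s` of `D` (where `θ(s) = Re(2/(1−s))`, `ϑ(s) = Im(2/(1−s))`), there is a constant
`C > 0` depending only on `n`, `D`, `α`, `β`, `h` such that for any target satisfying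
Assumption A1 and any solution of the sampled-data error recursion (2.0), the estimation
errors are ultimately bounded by `C · h · max(2γ₁, γ₂)`.
(Norms on `Fin m → ℝ` and `Fin n → Fin m → ℝ` are sup norms.) -/
theorem stmt_18 (n m : ℕ) (hn : 1 ≤ n) (hm : 1 ≤ m)
    (D : Matrix (Fin n) (Fin n) ℝ) (α β h : ℝ)
    (hα : 0 < α) (hβ : 0 < β) (hh : 0 < h)
    (heig : ∀ s ∈ (D.map (fun x => (x : ℂ))).charpoly.roots,
      s ≠ 1 ∧ β < (2 / (1 - s)).re ∧
        h < 2 * β ^ 2 * ((2 / (1 - s)).re - β) / (α * ((2 / (1 - s)).im ^ 2 + β ^ 2))) :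
    ∃ C > 0, ∀ (γ₁ γ₂ : ℝ), 0 ≤ γ₁ → 0 ≤ γ₂ →
      ∀ (ε₀ υ₀ a₀ : ℝ → Fin m → ℝ),
        (∀ t, HasDerivAt ε₀ (υ₀ t) t) → (∀ t, HasDerivAt υ₀ (a₀ t) t) →
        (∀ t, ‖υ₀ t‖ ≤ γ₁) → (∀ t, ‖a₀ t‖ ≤ γ₂) →
      ∀ (t₀ : ℝ) (t : ℕ → ℝ), (∀ k, t k = t₀ + k * h) →
      ∀ (εb υb : ℕ → Fin n → Fin m → ℝ),
        (∀ k, 1 ≤ k → ∀ i, εb (k + 1) i =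
          (∑ j, (((1 - α * h) • (1 : Matrix (Fin n) (Fin n) ℝ) + (α * h) • D) i j) • εb k j)
            + h • (∑ j, (((1 - β) • (1 : Matrix (Fin n) (Fin n) ℝ) + β • D) i j) • υb k j)
            + (ε₀ (t k) - ε₀ (t (k + 1)) + h • υ₀ (t k))) →
        (∀ k, 1 ≤ k → ∀ i, υb (k + 1) i =
          α • (∑ j, ((D - 1 : Matrix (Fin n) (Fin n) ℝ) i j) • εb k j)
            + (∑ j, (((1 - β) • (1 : Matrix (Fin n) (Fin n) ℝ) + β • D) i j) • υb k j)
            + (υ₀ (t k) - υ₀ (t (k + 1)))) →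
        Filter.limsup (fun k => ‖εb k‖) Filter.atTop ≤ C * h * max (2 * γ₁) γ₂ ∧
          Filter.limsup (fun k => ‖υb k‖) Filter.atTop ≤ C * h * max (2 * γ₁) γ₂ := by
  
  have hS := gamma_summable hn D α β h hα hβ hh heig
  set A := Matrix.fromBlocks
      ((1 - α * h) • (1 : Matrix (Fin n) (Fin n) ℝ) + (α * h) • D)
      (h • ((1 - β) • (1 : Matrix (Fin n) (Fin n) ℝ) + β • D))
      (α • (D - 1)) ((1 - β) • (1 : Matrix (Fin n) (Fin n) ℝ) + β • D) with hA
  have hS0 : 0 ≤ ∑' j, ‖A ^ j‖ := tsum_nonneg fun _ => norm_nonneg _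
  refine ⟨(∑' j, ‖A ^ j‖) + 1, by positivity, ?_⟩
  intro γ₁ γ₂ hγ₁ hγ₂ ε₀ υ₀ a₀ hε hυ hb1 hb2 t₀ t ht εb υb hr1 hr2
  have htk : ∀ k, t (k + 1) = t k + h := by
    intro k; rw [ht, ht]; push_cast; ring
  set δ := h * max (2 * γ₁) γ₂ with hδ
  have hδ0 : 0 ≤ δ := mul_nonneg hh.le (hγ₂.trans (le_max_right _ _))
  have hd1 : ∀ k, ‖ε₀ (t k) - ε₀ (t (k + 1)) + h • υ₀ (t k)‖ ≤ δ := by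
    intro k
    have e1 := incr_bound ε₀ υ₀ γ₁ hε hb1 (t k) h hh
    have e2 : ‖h • υ₀ (t k)‖ ≤ h * γ₁ := by
      rw [norm_smul, Real.norm_of_nonneg hh.le]
      exact mul_le_mul_of_nonneg_left (hb1 _) hh.le
    rw [htk]
    have e3 : h * (2 * γ₁) ≤ δ := mul_le_mul_of_nonneg_left (le_max_left _ _) hh.le
    linarith [norm_add_le (ε₀ (t k) - ε₀ (t k + h)) (h • υ₀ (t k))]
  have hd2 : ∀ k, ‖υ₀ (t k) - υ₀ (t (k + 1))‖ ≤ δ := by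
    intro k
    rw [htk]
    exact (incr_bound υ₀ a₀ γ₂ hυ hb2 (t k) h hh).trans
      (mul_le_mul_of_nonneg_left (le_max_right _ _) hh.le)
  obtain ⟨X, hX⟩ : ∃ X : Fin m → ℕ → (Fin n ⊕ Fin n) → ℝ,
      X = fun c k => Sum.elim (fun i => εb k i c) (fun i => υb k i c) := ⟨_, rfl⟩
  obtain ⟨d, hd⟩ : ∃ d : Fin m → ℕ → (Fin n ⊕ Fin n) → ℝ,
      d = fun c k => Sum.elim (fun _ => (ε₀ (t k) - ε₀ (t (k + 1)) + h • υ₀ (t k)) c)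
        (fun _ => (υ₀ (t k) - υ₀ (t (k + 1))) c) := ⟨_, rfl⟩
  have hdb : ∀ c k, ‖d c k‖ ≤ δ := by
    intro c k
    rw [pi_norm_le_iff_of_nonneg hδ0, hd]
    rintro (i | i)
    · exact (norm_le_pi_norm _ c).trans (hd1 k)
    · exact (norm_le_pi_norm _ c).trans (hd2 k)
  have hrec : ∀ c k, 1 ≤ k → X c (k + 1) = A *ᵥ X c k + d c k := by
    intro c k hk
    rw [hX, hd, hA]
    simp only [Matrix.fromBlocks_mulVec]
    ext (i | i)
    · simp only [Sum.elim_inl, Pi.add_apply, Matrix.smul_mulVec, Pi.smul_apply, Sum.elim_comp_inl,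
        Sum.elim_comp_inr]
      rw [hr1 k hk i]
      simp [Matrix.mulVec, dotProduct, Finset.sum_apply]
    · simp only [Sum.elim_inr, Pi.add_apply, Matrix.smul_mulVec, Pi.smul_apply, Sum.elim_comp_inl,
        Sum.elim_comp_inr]
      rw [hr2 k hk i]
      simp [Matrix.mulVec, dotProduct, Finset.sum_apply]
  have hbound : ∀ c k, ‖X c (k + 1)‖ ≤ ‖A ^ k‖ * (∑ c, ‖X c 1‖) + (∑' j, ‖A ^ j‖) * δ := by
    intro c k
    refine (rec_bound A hS (X c) (d c) δ (hdb c) (hrec c) k).trans ?_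
    gcongr
    exact Finset.single_le_sum (f := fun c => ‖X c 1‖) (fun _ _ => norm_nonneg _) (Finset.mem_univ c)
  have hfin : (∑' j, ‖A ^ j‖) * δ ≤ ((∑' j, ‖A ^ j‖) + 1) * h * max (2 * γ₁) γ₂ := by
    rw [mul_assoc, ← hδ]
    nlinarith
  have hnn : ∀ k, 0 ≤ ‖A ^ k‖ * (∑ c, ‖X c 1‖) + (∑' j, ‖A ^ j‖) * δ := by
    intro k; positivity
  constructor
  · refine (limsup_le_aux εb (fun k => ‖A ^ k‖) (∑ c, ‖X c 1‖) _ hS.tendsto_atTop_zero ?_).trans hfin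
    intro k
    refine (pi_norm_le_iff_of_nonneg (hnn k)).mpr fun i =>
      (pi_norm_le_iff_of_nonneg (hnn k)).mpr fun c => le_trans ?_ (hbound c k)
    have := norm_le_pi_norm (X c (k + 1)) (Sum.inl i)
    simpa [hX] using this
  · refine (limsup_le_aux υb (fun k => ‖A ^ k‖) (∑ c, ‖X c 1‖) _ hS.tendsto_atTop_zero ?_).trans hfin
    intro k
    refine (pi_norm_le_iff_of_nonneg (hnn k)).mpr fun i =>
      (pi_norm_le_iff_of_nonneg (hnn k)).mpr fun c => le_trans ?_ (hbound c k)
    have := norm_le_pi_norm (X c (k + 1)) (Sum.inr i)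
    simpa [hX] using this
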